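/- arXiv:math-ph/9812015 — 2 statements merged into one kernel-verified Lean document; each statement's English description precedes it below -/
import Mathlib

section
/- For an integer N ≥ 1, let P_N be the probability measure on S^{N+1} given by P_N(x_0,…,x_N) = ρ(x_0) · Π_{k=0}^{N−1} p(x_{k+1}|x_k), and define the action functional W̃_N(x_0,…,x_N) = Σ_{k=0}^{N−1} [ln p(x_{k+1}|x_k) − ln p(x_k|x_{k+1})]. Then for every λ ∈ ℝ and every N ≥ 1, |ln Σ_x P_N(x) exp(−λ W̃_N(x)) − ln Σ_x P_N(x) exp(−(1−λ) W̃_N(x))| ≤ 2 (|λ| + |1−λ|) · max_{b∈S} |ln ρ(b)|, a bound uniform in N. -/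
open scoped BigOperators

/-!
Let `w(x)` be the product of the transition probabilities along a path `x`, and let `W(x)` be its
action. Reversing time negates `W` and multiplies `w` by `exp (-W)`, so it turns
`w * exp (-(1 - l) * W)` into `w * exp (-l * W)`. Hence the Laplace transforms of `W` at `l` and
at `1 - l` are sums of the same path weights, weighted by `ρ (x 0)` in the first and by `ρ (x N)`
in the second. The logarithms of these weights differ by at most the oscillation of `log ρ`, and
therefore so do those of the sums, whatever `N` is.
-/

open Real

section LogSum

variable {ι : Type*} {s : Finset ι} {f g : ι → ℝ} {C : ℝ}

theorem log_sum_sub_log_sum_le (hs : s.Nonempty) (hf : ∀ i ∈ s, 0 < f i) (hg : ∀ i ∈ s, 0 < g i)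
    (h : ∀ i ∈ s, log (f i) - log (g i) ≤ C) :
    log (∑ i ∈ s, f i) - log (∑ i ∈ s, g i) ≤ C := by
  have f_le (i) (hi : i ∈ s) : f i ≤ exp C * g i := by
    rw [← div_le_iff₀ (hg i hi), ← log_le_iff_le_exp (div_pos (hf i hi) (hg i hi)),
      log_div (hf i hi).ne' (hg i hi).ne']
    exact h i hi
  have sum_f_pos := Finset.sum_pos hf hs
  have sum_g_pos := Finset.sum_pos hg hs
  rw [← log_div sum_f_pos.ne' sum_g_pos.ne', log_le_iff_le_exp (div_pos sum_f_pos sum_g_pos),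
    div_le_iff₀ sum_g_pos, Finset.mul_sum]
  exact Finset.sum_le_sum f_le

theorem abs_log_sum_sub_log_sum_le (hs : s.Nonempty) (hf : ∀ i ∈ s, 0 < f i)
    (hg : ∀ i ∈ s, 0 < g i) (h : ∀ i ∈ s, |log (f i) - log (g i)| ≤ C) :
    |log (∑ i ∈ s, f i) - log (∑ i ∈ s, g i)| ≤ C :=
  abs_sub_le_iff.2
    ⟨log_sum_sub_log_sum_le hs hf hg fun i hi ↦ (abs_sub_le_iff.1 (h i hi)).1,
      log_sum_sub_log_sum_le hs hg hf fun i hi ↦ (abs_sub_le_iff.1 (h i hi)).2⟩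

end LogSum

theorem abs_sub_le_two_mul_iSup_abs {ι : Type*} {f : ι → ℝ}
    (hf : BddAbove (Set.range fun i ↦ |f i|)) (i j : ι) : |f i - f j| ≤ 2 * ⨆ k, |f k| :=
  calc
    |f i - f j| ≤ |f i| + |f j| := abs_sub _ _
    _ ≤ (⨆ k, |f k|) + ⨆ k, |f k| := add_le_add (le_ciSup hf i) (le_ciSup hf j)
    _ = 2 * ⨆ k, |f k| := (two_mul _).symm

theorem one_le_abs_add_abs_one_sub (a : ℝ) : 1 ≤ |a| + |1 - a| := by
  simpa using abs_add_le a (1 - a)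

section Path

variable {S : Type*} {N : ℕ}

/-- The product of the transition weights along the path `x`, that is, the probability of `x`
conditioned on its initial state. As `p a b` stands for `p(a|b)`, each step contributes
`p (new state) (old state)`. -/
def pathWeight (p : S → S → ℝ) (x : Fin (N + 1) → S) : ℝ :=
  ∏ k : Fin N, p (x k.succ) (x k.castSucc)

/-- The Lebowitz–Spohn action functional of the path `x`: the sum of the entropy-production
currents of its steps. -/
noncomputable def pathAction (p : S → S → ℝ) (x : Fin (N + 1) → S) : ℝ :=
  ∑ k : Fin N, (log (p (x k.succ) (x k.castSucc)) - log (p (x k.castSucc) (x k.succ)))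

/-- The Laplace transform at `l` of the action functional of paths with `N` steps, where `ρ` is
the weight of the initial state. -/
noncomputable def actionLaplaceTransform [Fintype S] (p : S → S → ℝ) (ρ : S → ℝ) (N : ℕ)
    (l : ℝ) : ℝ :=
  ∑ x : Fin (N + 1) → S, ρ (x 0) * pathWeight p x * exp (-l * pathAction p x)

variable {p : S → S → ℝ}

theorem pathWeight_pos (hp : ∀ a b, 0 < p a b) (x : Fin (N + 1) → S) : 0 < pathWeight p x :=
  Finset.prod_pos fun _ _ ↦ hp _ _

theorem pathWeight_comp_rev (p : S → S → ℝ) (x : Fin (N + 1) → S) :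
    pathWeight p (x ∘ Fin.rev) = pathWeight (flip p) x :=
  Fintype.prod_equiv Fin.revPerm _ _ fun k ↦ by simp [flip, Fin.rev_succ, Fin.rev_castSucc]

theorem pathAction_comp_rev (p : S → S → ℝ) (x : Fin (N + 1) → S) :
    pathAction p (x ∘ Fin.rev) = -pathAction p x := by
  rw [pathAction, pathAction, ← Finset.sum_neg_distrib]
  exact Fintype.sum_equiv Fin.revPerm _ _ fun k ↦ by simp [Fin.rev_succ, Fin.rev_castSucc]

theorem pathWeight_flip (hp : ∀ a b, 0 < p a b) (x : Fin (N + 1) → S) :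
    pathWeight (flip p) x = pathWeight p x * exp (-pathAction p x) := by
  rw [pathWeight, pathWeight, pathAction, ← Finset.sum_neg_distrib, exp_sum,
    ← Finset.prod_mul_distrib]
  refine Finset.prod_congr rfl fun k _ ↦ ?_
  rw [neg_sub, exp_sub, exp_log (hp _ _), exp_log (hp _ _), mul_div_cancel₀ _ (hp _ _).ne', flip]

theorem pathWeight_mul_exp_comp_rev (hp : ∀ a b, 0 < p a b) (l : ℝ) (x : Fin (N + 1) → S) :
    pathWeight p (x ∘ Fin.rev) * exp (-(1 - l) * pathAction p (x ∘ Fin.rev)) =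
      pathWeight p x * exp (-l * pathAction p x) := by
  rw [pathWeight_comp_rev, pathWeight_flip hp, pathAction_comp_rev, mul_assoc, ← exp_add]
  ring_nf

theorem actionLaplaceTransform_one_sub [Fintype S] (hp : ∀ a b, 0 < p a b) (ρ : S → ℝ) (N : ℕ)
    (l : ℝ) :
    actionLaplaceTransform p ρ N (1 - l) =
      ∑ x : Fin (N + 1) → S, ρ (x (Fin.last N)) * pathWeight p x * exp (-l * pathAction p x) := by
  refine (Fintype.sum_equiv (Fin.revPerm.arrowCongr (Equiv.refl S)) _ _ fun x ↦ ?_).symm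
  change _ = ρ ((x ∘ Fin.rev) 0) * pathWeight p (x ∘ Fin.rev) *
    exp (-(1 - l) * pathAction p (x ∘ Fin.rev))
  rw [mul_assoc, mul_assoc, pathWeight_mul_exp_comp_rev hp, Function.comp_apply, Fin.rev_zero]

theorem abs_log_actionLaplaceTransform_sub_le [Fintype S] [Nonempty S] (hp : ∀ a b, 0 < p a b)
    {ρ : S → ℝ} (hρ : ∀ b, 0 < ρ b) {C : ℝ} (hC : ∀ a b, |log (ρ a) - log (ρ b)| ≤ C)
    (N : ℕ) (l : ℝ) :
    |log (actionLaplaceTransform p ρ N l) - log (actionLaplaceTransform p ρ N (1 - l))| ≤ C := by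
  have weight_pos (b : S) (x : Fin (N + 1) → S) :
      0 < ρ b * pathWeight p x * exp (-l * pathAction p x) :=
    mul_pos (mul_pos (hρ b) (pathWeight_pos hp x)) (exp_pos _)
  have log_weight (b : S) (x : Fin (N + 1) → S) :
      log (ρ b * pathWeight p x * exp (-l * pathAction p x)) =
        log (ρ b) + log (pathWeight p x * exp (-l * pathAction p x)) := by
    rw [mul_assoc, log_mul (hρ b).ne' (mul_pos (pathWeight_pos hp x) (exp_pos _)).ne']
  rw [actionLaplaceTransform_one_sub hp]
  refine abs_log_sum_sub_log_sum_le Finset.univ_nonempty (fun x _ ↦ weight_pos _ x)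
    (fun x _ ↦ weight_pos _ x) fun x _ ↦ ?_
  rw [log_weight, log_weight, add_sub_add_right_eq_sub]
  exact hC _ _

end Path

theorem markov_chain_action_functional_fluctuation_bound_general {S : Type*} [Fintype S]
    [Nonempty S] (p : S → S → ℝ) (hp : ∀ a b, 0 < p a b) (ρ : S → ℝ) (hρ : ∀ b, 0 < ρ b)
    (N : ℕ) (l : ℝ) :
    |log (actionLaplaceTransform p ρ N l) - log (actionLaplaceTransform p ρ N (1 - l))| ≤
      2 * ⨆ b, |log (ρ b)| :=
  abs_log_actionLaplaceTransform_sub_le hp hρ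
    (abs_sub_le_two_mul_iSup_abs (Set.finite_range _).bddAbove) N l

/-- Asymptotic fluctuation symmetry for the Lebowitz–Spohn action functional of a
stationary finite-state Markov chain: with path measure
`P_N(x) = ρ(x_0) Π_{k<N} p(x_{k+1}|x_k)` and action
`W̃_N(x) = Σ_{k<N} [ln p(x_{k+1}|x_k) − ln p(x_k|x_{k+1})]`, for every `λ` and every
`N ≥ 1`,
`|ln Σ_x P_N(x) e^{−λ W̃_N(x)} − ln Σ_x P_N(x) e^{−(1−λ) W̃_N(x)}| ≤
  2(|λ| + |1−λ|) · max_b |ln ρ(b)|`, a bound uniform in `N`.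
Here `p a b` denotes the transition probability `p(a|b)`. -/
theorem markov_chain_action_functional_fluctuation_bound
    {S : Type*} [Fintype S] [Nonempty S] [DecidableEq S]
    (p : S → S → ℝ) (hp : ∀ a b, 0 < p a b) (hpsum : ∀ b, ∑ a, p a b = 1)
    (ρ : S → ℝ) (hρ : ∀ b, 0 < ρ b) (hρsum : ∑ b, ρ b = 1)
    (hstat : ∀ a, ∑ b, p a b * ρ b = ρ a) :
    ∀ (N : ℕ), 1 ≤ N → ∀ lam : ℝ,
      |Real.log (∑ x : Fin (N + 1) → S,
            (ρ (x 0) * ∏ k : Fin N, p (x k.succ) (x k.castSucc)) *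
              Real.exp (-lam * ∑ k : Fin N,
                (Real.log (p (x k.succ) (x k.castSucc)) -
                  Real.log (p (x k.castSucc) (x k.succ))))) -
          Real.log (∑ x : Fin (N + 1) → S,
            (ρ (x 0) * ∏ k : Fin N, p (x k.succ) (x k.castSucc)) *
              Real.exp (-(1 - lam) * ∑ k : Fin N,
                (Real.log (p (x k.succ) (x k.castSucc)) -
                  Real.log (p (x k.castSucc) (x k.succ)))))| ≤
        2 * (|lam| + |1 - lam|) * ⨆ b : S, |Real.log (ρ b)| := by
  intro N _ lam
  refine (markov_chain_action_functional_fluctuation_bound_general p hp ρ hρ N lam).trans ?_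
  gcongr
  · exact Real.iSup_nonneg fun b ↦ abs_nonneg _
  · exact le_mul_of_one_le_right zero_le_two (one_le_abs_add_abs_one_sub lam)
end

section
/- The mean entropy production is nonnegative: Σ_{b∈S} ρ(b) Σ_{a∈S} p(a|b) [ln p(a|b) − ln p(b|a)] ≥ 0, and it equals 0 if and only if detailed balance holds, i.e. ρ(b) p(a|b) = ρ(a) p(b|a) for all a, b ∈ S. -/
open scoped BigOperators

/-!
Let `F(b, a) = ρ(b) p(a|b)` be the flow along the transition `b → a`. Replacing `ln p(a|b)` by
`ln F(b, a)` adds `ln ρ(b) - ln ρ(a)` to each entropy production current; averaged against `F`, this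
difference vanishes because stationarity makes the flow into every state equal to the flow out of
it. Mean entropy production is therefore the relative entropy of `F` with respect to the reversed
flow `(b, a) ↦ F(a, b)`. The two have the same total mass, so Gibbs' inequality shows that it is
nonnegative and that it vanishes exactly when `F` is symmetric, which is detailed balance.
-/

open Finset Real InformationTheory

section RelativeEntropy

lemma mul_klFun_div {x y : ℝ} (hxy : y = 0 → x = 0) :
    y * klFun (x / y) = x * (log x - log y) - (x - y) := by
  rcases eq_or_ne y 0 with rfl | hy
  · simp [hxy rfl]
  rcases eq_or_ne x 0 with rfl | hx
  · simp [klFun_zero]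
  · rw [klFun_apply, log_div hx hy]
    field_simp
    ring

lemma mul_klFun_div_nonneg {x y : ℝ} (hx : 0 ≤ x) (hy : 0 ≤ y) : 0 ≤ y * klFun (x / y) :=
  mul_nonneg hy (klFun_nonneg (div_nonneg hx hy))

lemma mul_klFun_div_eq_zero_iff {x y : ℝ} (hx : 0 ≤ x) (hy : 0 ≤ y) (hxy : y = 0 → x = 0) :
    y * klFun (x / y) = 0 ↔ x = y := by
  rcases eq_or_ne y 0 with rfl | hy0
  · simp [hxy rfl]
  · rw [mul_eq_zero_iff_left hy0, klFun_eq_zero_iff (div_nonneg hx hy), div_eq_one_iff_eq hy0]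

variable {ι : Type*} {s : Finset ι} {f g : ι → ℝ}

/-- The relative entropy (Kullback–Leibler divergence) of the weights `f` with respect to the
weights `g` on the finite set `s`; neither need be normalized. As `Real.log 0 = 0`, an index at
which `f` vanishes contributes `0`, as usual; the value is meaningful only if `f` vanishes wherever
`g` does, since the relative entropy is infinite otherwise. -/
noncomputable def relEntropy (s : Finset ι) (f g : ι → ℝ) : ℝ :=
  ∑ i ∈ s, f i * (log (f i) - log (g i))

lemma sum_mul_klFun_div (hfg : ∀ i ∈ s, g i = 0 → f i = 0) :
    ∑ i ∈ s, g i * klFun (f i / g i) = relEntropy s f g - (∑ i ∈ s, f i - ∑ i ∈ s, g i) := by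
  rw [relEntropy, ← sum_sub_distrib, ← sum_sub_distrib]
  exact sum_congr rfl fun i hi => mul_klFun_div (hfg i hi)

lemma relEntropy_self : relEntropy s f f = 0 := by
  simp [relEntropy]

theorem relEntropy_nonneg (hf : ∀ i ∈ s, 0 ≤ f i) (hg : ∀ i ∈ s, 0 ≤ g i)
    (hfg : ∀ i ∈ s, g i = 0 → f i = 0) (hsum : ∑ i ∈ s, g i ≤ ∑ i ∈ s, f i) :
    0 ≤ relEntropy s f g := by
  have hkl : 0 ≤ ∑ i ∈ s, g i * klFun (f i / g i) :=
    sum_nonneg fun i hi => mul_klFun_div_nonneg (hf i hi) (hg i hi)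
  linarith [sum_mul_klFun_div hfg]

theorem relEntropy_eq_zero_iff (hf : ∀ i ∈ s, 0 ≤ f i) (hg : ∀ i ∈ s, 0 ≤ g i)
    (hfg : ∀ i ∈ s, g i = 0 → f i = 0) (hsum : ∑ i ∈ s, g i ≤ ∑ i ∈ s, f i) :
    relEntropy s f g = 0 ↔ ∀ i ∈ s, f i = g i := by
  have hterm : ∀ i ∈ s, 0 ≤ g i * klFun (f i / g i) :=
    fun i hi => mul_klFun_div_nonneg (hf i hi) (hg i hi)
  refine ⟨fun h i hi => ?_, fun h => ?_⟩
  · have hkl : ∑ i ∈ s, g i * klFun (f i / g i) = 0 :=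
      le_antisymm (by linarith [sum_mul_klFun_div hfg]) (sum_nonneg hterm)
    exact (mul_klFun_div_eq_zero_iff (hf i hi) (hg i hi) (hfg i hi)).1
      ((sum_eq_zero_iff_of_nonneg hterm).1 hkl i hi)
  · rw [← relEntropy_self (s := s) (f := f)]
    exact sum_congr rfl fun i hi => by rw [h i hi]

end RelativeEntropy

lemma sum_mul_sub_eq_zero_of_balanced {S R : Type*} [Fintype S] [CommRing R] {F : S × S → R}
    (hF : ∀ a, ∑ b, F (b, a) = ∑ b, F (a, b)) (φ : S → R) :
    ∑ e, F e * (φ e.1 - φ e.2) = 0 := by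
  have hout : ∑ e, F e * φ e.1 = ∑ a, (∑ b, F (a, b)) * φ a := by
    simp only [Fintype.sum_prod_type, sum_mul]
  have hin : ∑ e, F e * φ e.2 = ∑ a, (∑ b, F (b, a)) * φ a := by
    simp only [Fintype.sum_prod_type_right, sum_mul]
  simp only [mul_sub, sum_sub_distrib, hout, hin, hF, sub_self]

section EntropyProduction

variable {S : Type*} {p : S → S → ℝ} {ρ : S → ℝ}

/-- The flow `ρ(b) p(a|b)` along the transition `e = (b, a)` from `b` to `a`. For a stationary chain
it is the joint law of two consecutive states. -/
def edgeFlow (p : S → S → ℝ) (ρ : S → ℝ) (e : S × S) : ℝ :=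
  ρ e.1 * p e.2 e.1

lemma edgeFlow_nonneg (hp : ∀ a b, 0 ≤ p a b) (hρ : ∀ b, 0 ≤ ρ b) (e : S × S) :
    0 ≤ edgeFlow p ρ e :=
  mul_nonneg (hρ _) (hp _ _)

lemma edgeFlow_mul_log_sub_log {e : S × S}
    (he : edgeFlow p ρ e.swap = 0 → edgeFlow p ρ e = 0) :
    edgeFlow p ρ e * (log (edgeFlow p ρ e) - log (edgeFlow p ρ e.swap)) =
      ρ e.1 * (p e.2 e.1 * (log (p e.2 e.1) - log (p e.1 e.2))) +
        edgeFlow p ρ e * (log (ρ e.1) - log (ρ e.2)) := by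
  rcases eq_or_ne (edgeFlow p ρ e) 0 with h0 | h0
  · rw [← mul_assoc, ← edgeFlow, h0]
    ring
  · obtain ⟨hρ₁, hp₁⟩ := mul_ne_zero_iff.1 h0
    obtain ⟨hρ₂, hp₂⟩ := mul_ne_zero_iff.1 (mt he h0)
    simp only [Prod.fst_swap, Prod.snd_swap] at hρ₂ hp₂
    simp only [edgeFlow, Prod.fst_swap, Prod.snd_swap, log_mul hρ₁ hp₁, log_mul hρ₂ hp₂]
    ring

variable [Fintype S]

/-- Stationarity of the weights `ρ` for the transition rates `p`: at every state, inflow equals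
outflow. The columns of `p` need not sum to `1`, so that `p` may also hold the jump rates of a
continuous-time chain, for which this is the stationary master equation. -/
def IsStationaryWeight (p : S → S → ℝ) (ρ : S → ℝ) : Prop :=
  ∀ a, ∑ b, edgeFlow p ρ (b, a) = ∑ b, edgeFlow p ρ (a, b)

/-- The mean entropy production `Σ_b ρ(b) Σ_a p(a|b) [ln p(a|b) − ln p(b|a)]`. As `Real.log 0 = 0`,
it is meaningful only if the reverse of every forbidden transition is forbidden as well. -/
noncomputable def entropyProduction (p : S → S → ℝ) (ρ : S → ℝ) : ℝ :=
  ∑ b, ρ b * ∑ a, p a b * (log (p a b) - log (p b a))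

lemma isStationaryWeight_of_sum_eq_one (hpsum : ∀ b, ∑ a, p a b = 1)
    (hstat : ∀ a, ∑ b, p a b * ρ b = ρ a) : IsStationaryWeight p ρ := fun a => by
  simp only [edgeFlow, ← mul_sum, hpsum, mul_one, mul_comm (ρ _) (p a _), hstat]

lemma IsStationaryWeight.edgeFlow_eq_zero_of_swap (hstat : IsStationaryWeight p ρ)
    (hp : ∀ a b, 0 ≤ p a b) (hp_symm : ∀ a b, p a b = 0 → p b a = 0) (hρ : ∀ b, 0 ≤ ρ b)
    {e : S × S} (he : edgeFlow p ρ e.swap = 0) : edgeFlow p ρ e = 0 := by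
  obtain ⟨b, a⟩ := e
  rcases mul_eq_zero.1 he with hρa | hpba
  · have hinflow : ∑ c, edgeFlow p ρ (c, a) = 0 := by
      rw [hstat a]
      exact sum_eq_zero fun c _ => mul_eq_zero_of_left hρa _
    exact (sum_eq_zero_iff_of_nonneg fun c _ => edgeFlow_nonneg hp hρ (c, a)).1 hinflow b
      (mem_univ b)
  · exact mul_eq_zero_of_right _ (hp_symm b a hpba)

theorem IsStationaryWeight.entropyProduction_eq_relEntropy_swap (hstat : IsStationaryWeight p ρ)
    (hrev : ∀ e, edgeFlow p ρ e.swap = 0 → edgeFlow p ρ e = 0) :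
    entropyProduction p ρ =
      relEntropy univ (edgeFlow p ρ) (fun e => edgeFlow p ρ e.swap) := by
  simp only [relEntropy, edgeFlow_mul_log_sub_log (hrev _), sum_add_distrib,
    sum_mul_sub_eq_zero_of_balanced hstat fun a => log (ρ a), add_zero]
  simp only [entropyProduction, mul_sum, Fintype.sum_prod_type]

end EntropyProduction

theorem markov_chain_entropy_production_nonneg_and_detailed_balance_general
    {S : Type*} [Fintype S] {p : S → S → ℝ} (hp : ∀ a b, 0 ≤ p a b)
    (hp_symm : ∀ a b, p a b = 0 → p b a = 0) {ρ : S → ℝ} (hρ : ∀ b, 0 ≤ ρ b)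
    (hstat : IsStationaryWeight p ρ) :
    0 ≤ entropyProduction p ρ ∧
      (entropyProduction p ρ = 0 ↔ ∀ a b, ρ b * p a b = ρ a * p b a) := by
  have hnonneg := edgeFlow_nonneg hp hρ
  have hrev : ∀ e, edgeFlow p ρ e.swap = 0 → edgeFlow p ρ e = 0 :=
    fun _ => hstat.edgeFlow_eq_zero_of_swap hp hp_symm hρ
  have hmass : ∑ e : S × S, edgeFlow p ρ e.swap ≤ ∑ e, edgeFlow p ρ e :=
    ((Equiv.prodComm S S).sum_comp (edgeFlow p ρ)).le
  rw [hstat.entropyProduction_eq_relEntropy_swap hrev]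
  refine ⟨relEntropy_nonneg (fun e _ => hnonneg e) (fun e _ => hnonneg e.swap)
    (fun e _ => hrev e) hmass, ?_⟩
  rw [relEntropy_eq_zero_iff (fun e _ => hnonneg e) (fun e _ => hnonneg e.swap)
    (fun e _ => hrev e) hmass]
  exact ⟨fun h a b => h (b, a) (mem_univ _), fun h e _ => h e.2 e.1⟩

/-- Nonnegativity of the mean entropy production of a stationary finite-state Markov
chain, and its vanishing characterizing detailed balance:
`Σ_b ρ(b) Σ_a p(a|b) [ln p(a|b) − ln p(b|a)] ≥ 0`, with equality if and only if
`ρ(b) p(a|b) = ρ(a) p(b|a)` for all `a, b`.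
Here `p a b` denotes the transition probability `p(a|b)`. -/
theorem markov_chain_entropy_production_nonneg_and_detailed_balance
    {S : Type*} [Fintype S] [Nonempty S]
    (p : S → S → ℝ) (hp : ∀ a b, 0 < p a b) (hpsum : ∀ b, ∑ a, p a b = 1)
    (ρ : S → ℝ) (hρ : ∀ b, 0 < ρ b) (hρsum : ∑ b, ρ b = 1)
    (hstat : ∀ a, ∑ b, p a b * ρ b = ρ a) :
    0 ≤ ∑ b, ρ b * ∑ a, p a b * (Real.log (p a b) - Real.log (p b a)) ∧
      (∑ b, ρ b * ∑ a, p a b * (Real.log (p a b) - Real.log (p b a)) = 0 ↔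
        ∀ a b, ρ b * p a b = ρ a * p b a) :=
  markov_chain_entropy_production_nonneg_and_detailed_balance_general (fun a b => (hp a b).le)
    (fun a b h => absurd h (hp a b).ne') (fun b => (hρ b).le)
    (isStationaryWeight_of_sum_eq_one hpsum hstat)
end
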